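/- For the weight a = (4,5,6) (the weight of the S₁₁-singularity), there exist 3×3 matrices C and D with non-negative integer entries such that |det D| = 1, B_a = C·D, (4,5,6) = (1,1,1)·D, and f_C has an isolated critical point at the origin of ℂ³ (all partial derivatives of f_C vanish at 0, and there is a punctured neighborhood of 0 containing no critical point of f_C); moreover any such C satisfies |det C| = 16. -/

import Mathlib

open Matrix BigOperators

noncomputable section

/-- `f_C(x,y,z) = Σ_{i=1}^{3} x^{c_{i1}} y^{c_{i2}} z^{c_{i3}}` for a 3×3 matrix `C`
with non-negative integer entries. -/
def fC (C : Matrix (Fin 3) (Fin 3) ℕ) : (Fin 3 → ℂ) → ℂ :=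
  fun v => ∑ i : Fin 3, ∏ j : Fin 3, v j ^ C i j

/-- `φ_D(u₁,u₂,u₃) = (u₁^{d_{i1}} u₂^{d_{i2}} u₃^{d_{i3}})_{i=1}^{3}`. -/
def phiD (D : Matrix (Fin 3) (Fin 3) ℕ) : (Fin 3 → ℂ) → (Fin 3 → ℂ) :=
  fun u i => ∏ j : Fin 3, u j ^ D i j

/-- The matrix `B_a` with rows `(a₁+1,a₂,a₃)`, `(a₁,a₂+1,a₃)`, `(a₁,a₂,a₃+1)`. -/
def Bmat (a : Fin 3 → ℕ) : Matrix (Fin 3) (Fin 3) ℕ :=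
  fun i j => a j + if i = j then 1 else 0

/-- `G_a(u₁,u₂,u₃) = u₁^{a₁+1}u₂^{a₂}u₃^{a₃} + u₁^{a₁}u₂^{a₂+1}u₃^{a₃} + u₁^{a₁}u₂^{a₂}u₃^{a₃+1}`. -/
def Ga (a : Fin 3 → ℕ) : (Fin 3 → ℂ) → ℂ :=
  fun u => u 0 ^ (a 0 + 1) * u 1 ^ a 1 * u 2 ^ a 2
         + u 0 ^ a 0 * u 1 ^ (a 1 + 1) * u 2 ^ a 2
         + u 0 ^ a 0 * u 1 ^ a 1 * u 2 ^ (a 2 + 1)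

/-- `H_a(u₁,u₂,u₃) = u₁^{a₁}u₂^{a₂}u₃^{a₃}`. -/
def Ha (a : Fin 3 → ℕ) : (Fin 3 → ℂ) → ℂ :=
  fun u => u 0 ^ a 0 * u 1 ^ a 1 * u 2 ^ a 2

/-- Determinant of a matrix of natural numbers, computed over `ℤ`. -/
def detZ (M : Matrix (Fin 3) (Fin 3) ℕ) : ℤ :=
  (M.map (fun n : ℕ => (n : ℤ))).det

/-- `f` has an isolated critical point at the origin of `ℂ³`: the derivative of `f`
vanishes at `0`, and there is a punctured neighborhood of `0` containing no critical
point of `f`. -/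
def IsolatedCriticalAtZero (f : (Fin 3 → ℂ) → ℂ) : Prop :=
  fderiv ℂ f 0 = 0 ∧
  ∃ ε : ℝ, ε > 0 ∧ ∀ p : Fin 3 → ℂ, p ≠ 0 → ‖p‖ < ε → fderiv ℂ f p ≠ 0

lemma fC_hasFDerivAt (p : Fin 3 → ℂ) :
    HasFDerivAt (fC !![4,0,1;0,2,0;0,1,2])
      ((4 * p 0 ^ 3 * p 2) • (ContinuousLinearMap.proj 0 : (Fin 3 → ℂ) →L[ℂ] ℂ)
        + (2 * p 1 + p 2 ^ 2) • (ContinuousLinearMap.proj 1 : (Fin 3 → ℂ) →L[ℂ] ℂ)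
        + (p 0 ^ 4 + 2 * p 1 * p 2) • (ContinuousLinearMap.proj 2 : (Fin 3 → ℂ) →L[ℂ] ℂ)) p := by
  have e : fC !![4,0,1;0,2,0;0,1,2] =
      fun v => v 0 ^ 4 * v 2 + v 1 ^ 2 + v 1 * v 2 ^ 2 := by
    funext v
    simp [fC, Fin.sum_univ_three, Fin.prod_univ_three]
  rw [e]
  have h (i : Fin 3) : HasFDerivAt (fun v : Fin 3 → ℂ => v i)
      (ContinuousLinearMap.proj i : (Fin 3 → ℂ) →L[ℂ] ℂ) p :=
    (ContinuousLinearMap.proj i : (Fin 3 → ℂ) →L[ℂ] ℂ).hasFDerivAt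
  have key := ((((h 0).pow 4).mul (h 2)).add ((h 1).pow 2)).add ((h 1).mul ((h 2).pow 2))
  refine key.congr_fderiv ?_
  ext v
  simp
  ring

theorem stmt_18 :
    (∃ C D : Matrix (Fin 3) (Fin 3) ℕ,
      |detZ D| = 1 ∧
      Bmat ![4, 5, 6] = C * D ∧
      (∀ j, (∑ i : Fin 3, D i j) = ![4, 5, 6] j) ∧
      IsolatedCriticalAtZero (fC C)) ∧
    (∀ C D : Matrix (Fin 3) (Fin 3) ℕ,
      |detZ D| = 1 →
      Bmat ![4, 5, 6] = C * D →
      (∀ j, (∑ i : Fin 3, D i j) = ![4, 5, 6] j) →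
      IsolatedCriticalAtZero (fC C) →
      |detZ C| = 16) := by
  constructor
  · refine ⟨!![4,0,1;0,2,0;0,1,2], !![1,1,1;2,3,3;1,1,2], ?_, ?_, ?_, ?_, 1, one_pos, ?_⟩
    · simp [detZ, Matrix.det_fin_three]
    · ext i j
      fin_cases i <;> fin_cases j <;> simp [Bmat, Matrix.mul_apply, Fin.sum_univ_three]
    · intro j
      fin_cases j <;> simp [Fin.sum_univ_three]
    · rw [(fC_hasFDerivAt 0).fderiv]
      ext v
      simp
    · intro p hp _ h
      rw [(fC_hasFDerivAt p).fderiv] at h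
      have h0 := DFunLike.congr_fun h (Pi.single 0 1)
      have h1 := DFunLike.congr_fun h (Pi.single 1 1)
      have h2 := DFunLike.congr_fun h (Pi.single 2 1)
      simp at h0 h1 h2
      have hz : p 2 = 0 := by
        rcases h0 with h0 | h0
        · rw [h0] at h2
          have : p 2 ^ 3 = 0 := by linear_combination p 2 * h1 - h2
          exact pow_eq_zero_iff (by norm_num) |>.1 this
        · exact h0
      have hy : p 1 = 0 := by
        simpa [hz] using h1
      have hx : p 0 = 0 := by
        simpa [hz] using h2
      apply hp
      funext i
      fin_cases i <;> simp [hx, hy, hz]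
  · intro C D hD hB _ _
    have h : detZ (Bmat ![4, 5, 6]) = detZ C * detZ D := by
      rw [hB]
      simp only [detZ]
      rw [← Matrix.det_mul]
      congr 1
    have hb : detZ (Bmat ![4, 5, 6]) = 16 := by
      simp [detZ, Matrix.det_fin_three, Bmat]
    rw [hb] at h
    have h' := congrArg abs h
    rw [abs_mul, hD, mul_one] at h'
    rw [← h']
    norm_num
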